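/- Let R₀ = ℤ[i, 1/2] and let R be the localization of the polynomial ring R₀[a,b] away from the element a² + b². Call an element f ∈ R homogeneous of degree m ∈ ℤ if the substitution a ↦ t·a, b ↦ t·b sends f to t^m·f in R[t, t⁻¹]. Then for each m ∈ ℤ, the R₀-module of homogeneous elements of degree m in R is free with basis the (infinite) family { (a + i·b)^p · (a - i·b)^q : p, q ∈ ℤ, p + q = m } (every homogeneous element of degree m is a finite R₀-linear combination of these, uniquely). -/

import Mathlib

open MvPolynomial

noncomputable section

/-- `R₀ = ℤ[i, 1/2]`, realized as the Gaussian integers localized away from `2`. -/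
abbrev R0 : Type := Localization.Away (2 : GaussianInt)

/-- The polynomial ring `R₀[a,b]`, with `a = X 0`, `b = X 1`. -/
abbrev A0 : Type := MvPolynomial (Fin 2) R0

/-- The variable `a`. -/
def aV : A0 := X 0

/-- The variable `b`. -/
def bV : A0 := X 1

/-- `R = R₀[a,b][1/(a²+b²)]`, the affine algebra of the group scheme `K̃ ⊗ ℤ[i,1/2]`. -/
abbrev R : Type := Localization.Away (aV ^ 2 + bV ^ 2)

/-- `S = R[t,t⁻¹]`, realized as `R[t]` localized away from `t`. -/
abbrev S : Type := Localization.Away (Polynomial.X : Polynomial R)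

/-- The element `t` of `S`. -/
def tS : S := algebraMap (Polynomial R) S Polynomial.X

/-- The imaginary unit `i` as an element of `R`. -/
def iR : R := algebraMap R0 R (algebraMap GaussianInt R0 ⟨0, 1⟩)

/-- The image of `a` in `R`. -/
def aR : R := algebraMap A0 R aV

/-- The image of `b` in `R`. -/
def bR : R := algebraMap A0 R bV

/-- The substitution `a ↦ t·a`, `b ↦ t·b` on the level of the variables. -/
def substVal (j : Fin 2) : S := tS * algebraMap R S (algebraMap A0 R (X j))

/-!
Since `2` is invertible, `a` and `b` can be recovered from `u = a + ib` and `v = a - ib`, and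
`a² + b² = uv`. Inverting `a² + b²` therefore turns the polynomial ring in `u` and `v` into the
group algebra of `ℤ × ℤ`, so the monomials `u ^ p * v ^ q` form a basis of the localization. The
substitution multiplies `u ^ p * v ^ q` by `t ^ (p + q)`; hence taking the coefficient of `t ^ m`
in the image of `f` kills the monomials with `p + q ≠ m` and fixes the others, while it returns `f`
itself when `f` is homogeneous of degree `m`.
-/

section ZPowPair

variable {G H : Type*} [CommGroup G] [CommGroup H]

/-- The homomorphism `(p, q) ↦ u ^ p * v ^ q` from `ℤ × ℤ`, written multiplicatively so that it
can be fed to the universal property of the group algebra. -/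
def zpowPairHom (u v : G) : Multiplicative (ℤ × ℤ) →* G where
  toFun n := u ^ n.toAdd.1 * v ^ n.toAdd.2
  map_one' := by simp
  map_mul' m n := by
    simp only [toAdd_mul, Prod.fst_add, Prod.snd_add, zpow_add]
    exact mul_mul_mul_comm _ _ _ _

lemma zpowPairHom_ofAdd (u v : G) (p q : ℤ) :
    zpowPairHom u v (Multiplicative.ofAdd (p, q)) = u ^ p * v ^ q :=
  rfl

lemma map_zpowPairHom (f : G →* H) (u v : G) (n : Multiplicative (ℤ × ℤ)) :
    f (zpowPairHom u v n) = zpowPairHom (f u) (f v) n := by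
  simp [zpowPairHom]

lemma multiplicativeIntProd_hom_ext {f g : Multiplicative (ℤ × ℤ) →* G}
    (h_fst : f (.ofAdd (1, 0)) = g (.ofAdd (1, 0)))
    (h_snd : f (.ofAdd (0, 1)) = g (.ofAdd (0, 1))) : f = g := by
  have eq_zpowPairHom (n : Multiplicative (ℤ × ℤ)) :
      n = zpowPairHom (.ofAdd (1, 0)) (.ofAdd (0, 1)) n := by
    apply Multiplicative.toAdd.injective
    ext <;> simp [zpowPairHom]
  refine MonoidHom.ext fun n ↦ ?_
  rw [eq_zpowPairHom n, map_zpowPairHom, map_zpowPairHom, h_fst, h_snd]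

lemma zpowPairHom_mul_mul (t u v : G) (p q : ℤ) :
    zpowPairHom (t * u) (t * v) (Multiplicative.ofAdd (p, q)) =
      t ^ (p + q) * (u ^ p * v ^ q) := by
  rw [zpowPairHom_ofAdd, mul_zpow, mul_zpow, zpow_add, mul_mul_mul_comm]

end ZPowPair

section IsotropicForm

variable {k : Type*} [CommRing k]
variable (B : Type*) [CommRing B] [Algebra (MvPolynomial (Fin 2) k) B] [Algebra k B]

/-- The linear form `a + i b`, as an element of an algebra `B` over `k[a, b]`. When `i ^ 2 = -1`,
the forms for `i` and `-i` are the two isotropic factors of `a² + b²`. -/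
def isotropicForm (i : k) : B :=
  algebraMap (MvPolynomial (Fin 2) k) B (X 0) +
    algebraMap k B i * algebraMap (MvPolynomial (Fin 2) k) B (X 1)

lemma isotropicForm_neg (i : k) :
    isotropicForm B (-i) = algebraMap (MvPolynomial (Fin 2) k) B (X 0) -
      algebraMap k B i * algebraMap (MvPolynomial (Fin 2) k) B (X 1) := by
  rw [isotropicForm, map_neg, neg_mul, ← sub_eq_add_neg]

end IsotropicForm

section GroupAlgebra

variable (k : Type*) [CommRing k] {C : Type*} [CommRing C] [Algebra k C]

/-- The basis element of the group algebra of `ℤ × ℤ` at `n`, as a unit. -/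
def monomialUnit (n : ℤ × ℤ) : (AddMonoidAlgebra k (ℤ × ℤ))ˣ :=
  (AddMonoidAlgebra.of k (ℤ × ℤ)).toHomUnits (.ofAdd n)

variable {k}

/-- The homomorphism from the group algebra of `ℤ × ℤ` that sends the standard generators to the
units `u` and `v`. -/
def groupAlgebraLift (u v : Cˣ) : AddMonoidAlgebra k (ℤ × ℤ) →ₐ[k] C :=
  AddMonoidAlgebra.lift k C (ℤ × ℤ) ((Units.coeHom C).comp (zpowPairHom u v))

lemma groupAlgebraLift_monomialUnit (u v : Cˣ) (n : ℤ × ℤ) :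
    groupAlgebraLift u v (monomialUnit k n : AddMonoidAlgebra k (ℤ × ℤ)) =
      ((u ^ n.1 * v ^ n.2 : Cˣ) : C) :=
  AddMonoidAlgebra.lift_of _ _

lemma groupAlgebra_algHom_ext {φ χ : AddMonoidAlgebra k (ℤ × ℤ) →ₐ[k] C}
    (h_fst : φ (monomialUnit k (1, 0)) = χ (monomialUnit k (1, 0)))
    (h_snd : φ (monomialUnit k (0, 1)) = χ (monomialUnit k (0, 1))) : φ = χ := by
  let restrictToUnits (ψ : AddMonoidAlgebra k (ℤ × ℤ) →ₐ[k] C) : Multiplicative (ℤ × ℤ) →* Cˣ :=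
    (Units.map (ψ : AddMonoidAlgebra k (ℤ × ℤ) →* C)).comp
      (AddMonoidAlgebra.of k (ℤ × ℤ)).toHomUnits
  have h_units : restrictToUnits φ = restrictToUnits χ :=
    multiplicativeIntProd_hom_ext (Units.ext h_fst) (Units.ext h_snd)
  ext n
  exact congrArg Units.val (DFunLike.congr_fun h_units (.ofAdd n))

end GroupAlgebra

section SplitTorus

variable {k : Type*} [CommRing k] {i : k}
variable {B : Type*} [CommRing B] [Algebra (MvPolynomial (Fin 2) k) B] [Algebra k B]
variable {C : Type*} [CommRing C] [Algebra k C]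

lemma algHom_isotropicForm (φ : B →ₐ[k] C) (j : k) :
    φ (isotropicForm B j) = φ (algebraMap (MvPolynomial (Fin 2) k) B (X 0)) +
      algebraMap k C j * φ (algebraMap (MvPolynomial (Fin 2) k) B (X 1)) := by
  simp [isotropicForm]

lemma algebraMap_sq_eq_neg_one (hi : i ^ 2 = -1) : algebraMap k C i ^ 2 = -1 := by
  rw [← map_pow, hi, map_neg, map_one]

variable [Invertible (2 : k)]

variable (k C) in
lemma two_mul_algebraMap_invOf_two : 2 * algebraMap k C ⅟2 = 1 := by
  rw [← map_ofNat (algebraMap k C) 2, ← map_mul, mul_invOf_self, map_one]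

/-- The values of `a` and `b` for which `a + i b = x` and `a - i b = y`, where `i ^ 2 = -1`. -/
def coordsOfIsotropic (i : k) (x y : C) : Fin 2 → C :=
  ![algebraMap k C ⅟2 * (x + y), -algebraMap k C i * algebraMap k C ⅟2 * (x - y)]

lemma aeval_coordsOfIsotropic_sq_add_sq (hi : i ^ 2 = -1) (x y : C) :
    aeval (coordsOfIsotropic i x y) (X 0 ^ 2 + X 1 ^ 2 : MvPolynomial (Fin 2) k) = x * y := by
  have h_half := two_mul_algebraMap_invOf_two k C
  have hi_C := algebraMap_sq_eq_neg_one (C := C) hi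
  simp only [coordsOfIsotropic, map_add, map_pow, aeval_X, Matrix.cons_val_zero,
    Matrix.cons_val_one]
  linear_combination (algebraMap k C ⅟2 ^ 2 * (x - y) ^ 2) * hi_C +
    (2 * algebraMap k C ⅟2 + 1) * x * y * h_half

lemma algHom_algebraMap_X_eq_coordsOfIsotropic (hi : i ^ 2 = -1) (φ : B →ₐ[k] C) (j : Fin 2) :
    φ (algebraMap (MvPolynomial (Fin 2) k) B (X j)) =
      coordsOfIsotropic i (φ (isotropicForm B i)) (φ (isotropicForm B (-i))) j := by
  have h_half := two_mul_algebraMap_invOf_two k C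
  have hi_C := algebraMap_sq_eq_neg_one (C := C) hi
  fin_cases j
  · simp only [algHom_isotropicForm, coordsOfIsotropic, map_neg, Fin.zero_eta,
      Matrix.cons_val_zero]
    linear_combination (-φ (algebraMap (MvPolynomial (Fin 2) k) B (X 0))) * h_half
  · simp only [algHom_isotropicForm, coordsOfIsotropic, map_neg, Fin.mk_one,
      Matrix.cons_val_one, Matrix.cons_val_zero]
    linear_combination φ (algebraMap (MvPolynomial (Fin 2) k) B (X 1)) *
      (2 * algebraMap k C ⅟2 * hi_C - h_half)

variable [IsScalarTower k (MvPolynomial (Fin 2) k) B]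
variable [IsLocalization.Away (X 0 ^ 2 + X 1 ^ 2 : MvPolynomial (Fin 2) k) B]

/-- The homomorphism from `k[a, b][1 / (a² + b²)]` that sends `a + i b` to `x` and `a - i b`
to `y`. -/
def isotropicLift (hi : i ^ 2 = -1) (x y : Cˣ) : B →ₐ[k] C :=
  IsLocalization.Away.liftAlgHom (X 0 ^ 2 + X 1 ^ 2 : MvPolynomial (Fin 2) k)
    (f := aeval (coordsOfIsotropic i (x : C) y)) <| by
      rw [aeval_coordsOfIsotropic_sq_add_sq hi]
      exact (x * y).isUnit

lemma isotropicLift_algebraMap_X (hi : i ^ 2 = -1) (x y : Cˣ) (j : Fin 2) :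
    isotropicLift (B := B) hi x y (algebraMap (MvPolynomial (Fin 2) k) B (X j)) =
      coordsOfIsotropic i (x : C) y j := by
  rw [isotropicLift, IsLocalization.Away.liftAlgHom_apply, IsLocalization.Away.lift_eq]
  exact aeval_X _ _

lemma isotropicLift_isotropicForm (hi : i ^ 2 = -1) (x y : Cˣ) :
    isotropicLift (B := B) hi x y (isotropicForm B i) = x := by
  have h_half := two_mul_algebraMap_invOf_two k C
  have hi_C := algebraMap_sq_eq_neg_one (C := C) hi
  simp only [algHom_isotropicForm, isotropicLift_algebraMap_X, coordsOfIsotropic,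
    Matrix.cons_val_zero, Matrix.cons_val_one]
  linear_combination (-algebraMap k C ⅟2 * (x - y)) * hi_C + x * h_half

lemma isotropicLift_isotropicForm_neg (hi : i ^ 2 = -1) (x y : Cˣ) :
    isotropicLift (B := B) hi x y (isotropicForm B (-i)) = y := by
  have h_half := two_mul_algebraMap_invOf_two k C
  have hi_C := algebraMap_sq_eq_neg_one (C := C) hi
  simp only [algHom_isotropicForm, isotropicLift_algebraMap_X, coordsOfIsotropic,
    Matrix.cons_val_zero, Matrix.cons_val_one, map_neg]
  linear_combination (algebraMap k C ⅟2 * (x - y)) * hi_C + y * h_half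

lemma algHom_ext_isotropicForm (hi : i ^ 2 = -1) {φ χ : B →ₐ[k] C}
    (h_pos : φ (isotropicForm B i) = χ (isotropicForm B i))
    (h_neg : φ (isotropicForm B (-i)) = χ (isotropicForm B (-i))) : φ = χ := by
  apply IsLocalization.algHom_ext (.powers (X 0 ^ 2 + X 1 ^ 2 : MvPolynomial (Fin 2) k))
  refine MvPolynomial.algHom_ext fun j ↦ ?_
  change φ (algebraMap _ B (X j)) = χ (algebraMap _ B (X j))
  rw [algHom_algebraMap_X_eq_coordsOfIsotropic hi, h_pos, h_neg,
    ← algHom_algebraMap_X_eq_coordsOfIsotropic hi]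

/-- The identification of the group algebra of `ℤ × ℤ` with `k[a, b][1 / (a² + b²)]` under which the
standard generators correspond to the units `u = a + i b` and `v = a - i b`. -/
def groupAlgebraEquiv (hi : i ^ 2 = -1) (u v : Bˣ) (hu : (u : B) = isotropicForm B i)
    (hv : (v : B) = isotropicForm B (-i)) : AddMonoidAlgebra k (ℤ × ℤ) ≃ₐ[k] B :=
  AlgEquiv.ofAlgHom (groupAlgebraLift u v)
    (isotropicLift hi (monomialUnit k (1, 0)) (monomialUnit k (0, 1)))
    (algHom_ext_isotropicForm hi
      (by simp [isotropicLift_isotropicForm, groupAlgebraLift_monomialUnit, hu])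
      (by simp [isotropicLift_isotropicForm_neg, groupAlgebraLift_monomialUnit, hv]))
    (groupAlgebra_algHom_ext
      (by simp [isotropicLift_isotropicForm, groupAlgebraLift_monomialUnit, hu])
      (by simp [isotropicLift_isotropicForm_neg, groupAlgebraLift_monomialUnit, hv]))

/-- The basis `u ^ p * v ^ q` of `k[a, b][1 / (a² + b²)]`, where `u = a + i b` and `v = a - i b`. -/
def isotropicBasis (hi : i ^ 2 = -1) (u v : Bˣ) (hu : (u : B) = isotropicForm B i)
    (hv : (v : B) = isotropicForm B (-i)) : Module.Basis (ℤ × ℤ) k B :=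
  (AddMonoidAlgebra.basis (ℤ × ℤ) k).map (groupAlgebraEquiv hi u v hu hv).toLinearEquiv

lemma isotropicBasis_apply (hi : i ^ 2 = -1) (u v : Bˣ) (hu : (u : B) = isotropicForm B i)
    (hv : (v : B) = isotropicForm B (-i)) (n : ℤ × ℤ) :
    isotropicBasis hi u v hu hv n = ((u ^ n.1 * v ^ n.2 : Bˣ) : B) :=
  groupAlgebraLift_monomialUnit u v n

lemma linearIndependent_zpow_mul_zpow_sub (hi : i ^ 2 = -1) (u v : Bˣ)
    (hu : (u : B) = isotropicForm B i) (hv : (v : B) = isotropicForm B (-i)) (m : ℤ) :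
    LinearIndependent k fun p : ℤ ↦ ((u ^ p * v ^ (m - p) : Bˣ) : B) := by
  have h_inj : Function.Injective fun p : ℤ ↦ (p, m - p) := fun p q h ↦ congrArg Prod.fst h
  simpa only [Function.comp_def, isotropicBasis_apply] using
    (isotropicBasis hi u v hu hv).linearIndependent.comp _ h_inj

end SplitTorus

section LaurentCoeff

variable {B : Type*} [CommRing B]
variable {L : Type*} [CommRing L] [Algebra (Polynomial B) L] [Algebra B L]
variable [IsScalarTower B (Polynomial B) L] [IsLocalization.Away (Polynomial.X : Polynomial B) L]

variable (B L) in
/-- The identification of a localization `L` of `B[t]` away from `t` with the Laurent polynomials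
over `B`. -/
def laurentEquiv : L ≃ₐ[B] LaurentPolynomial B :=
  have : IsScalarTower B (Polynomial B) (LaurentPolynomial B) :=
    .of_algebraMap_eq fun b ↦ (Polynomial.toLaurent_C b).symm
  (IsLocalization.algEquiv (.powers (Polynomial.X : Polynomial B)) L
    (LaurentPolynomial B)).restrictScalars B

lemma laurentEquiv_algebraMap_X :
    laurentEquiv B L (algebraMap (Polynomial B) L Polynomial.X) = LaurentPolynomial.T 1 := by
  simp [laurentEquiv, LaurentPolynomial.algebraMap_eq_toLaurent]

variable {t : Lˣ}

lemma laurentEquiv_zpow (ht : (t : L) = algebraMap (Polynomial B) L Polynomial.X) (n : ℤ) :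
    laurentEquiv B L (t ^ n : Lˣ) = LaurentPolynomial.T n := by
  have h_hom : ((laurentEquiv B L : L →* LaurentPolynomial B).comp (Units.coeHom L)).comp
      (zpowersHom Lˣ t) = AddMonoidAlgebra.of B ℤ :=
    MonoidHom.ext_mint <| by simpa [ht] using laurentEquiv_algebraMap_X
  simpa using DFunLike.congr_fun h_hom (.ofAdd n)

/-- The coefficient of `t ^ n` of an element of a localization `L` of `B[t]` away from `t`. -/
def laurentCoeff (n : ℤ) : L →ₗ[B] B :=
  Finsupp.lapply n ∘ₗ (AddMonoidAlgebra.coeffLinearEquiv B).toLinearMap ∘ₗ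
    (laurentEquiv B L).toLinearMap

lemma laurentCoeff_zpow_mul_algebraMap
    (ht : (t : L) = algebraMap (Polynomial B) L Polynomial.X) (m n : ℤ) (b : B) :
    laurentCoeff m ((t ^ n : Lˣ) * algebraMap B L b) = if n = m then b else 0 := by
  rw [mul_comm, ← Algebra.smul_def, map_smul]
  simp [laurentCoeff, laurentEquiv_zpow ht]

end LaurentCoeff

section Homogeneous

variable {k : Type*} [CommRing k]
variable {B : Type*} [CommRing B] [Algebra k B]
variable {L : Type*} [CommRing L] [Algebra B L] [Algebra k L] [IsScalarTower k B L]

/-- The elements of `B` that are homogeneous of degree `m` for the grading encoded by the coaction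
`γ : B → L`, where `L = B[t, t⁻¹]`. -/
def homogeneousPart (γ : B →ₐ[k] L) (t : Lˣ) (m : ℤ) : Submodule k B :=
  LinearMap.eqLocus γ.toLinearMap
    (LinearMap.mulLeft k ((t ^ m : Lˣ) : L) ∘ₗ (IsScalarTower.toAlgHom k B L).toLinearMap)

lemma mem_homogeneousPart {γ : B →ₐ[k] L} {t : Lˣ} {m : ℤ} {f : B} :
    f ∈ homogeneousPart γ t m ↔ γ f = ((t ^ m : Lˣ) : L) * algebraMap B L f :=
  Iff.rfl

lemma zpow_mul_zpow_mem_homogeneousPart {γ : B →ₐ[k] L} {t : Lˣ} {u v : Bˣ}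
    (hu : γ u = t * algebraMap B L u) (hv : γ v = t * algebraMap B L v) (p q : ℤ) :
    ((u ^ p * v ^ q : Bˣ) : B) ∈ homogeneousPart γ t (p + q) := by
  have map_u : Units.map (γ : B →* L) u = t * Units.map (algebraMap B L : B →* L) u :=
    Units.ext hu
  have map_v : Units.map (γ : B →* L) v = t * Units.map (algebraMap B L : B →* L) v :=
    Units.ext hv
  have h := map_zpowPairHom (Units.map (γ : B →* L)) u v (.ofAdd (p, q))
  rw [map_u, map_v, zpowPairHom_mul_mul, zpowPairHom_ofAdd, ← map_zpow, ← map_zpow,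
    ← map_mul] at h
  exact congrArg Units.val h

lemma map_isotropicForm_of_map_X [Algebra (MvPolynomial (Fin 2) k) B] {γ : B →ₐ[k] L} {t : L}
    (hγ : ∀ j, γ (algebraMap (MvPolynomial (Fin 2) k) B (X j)) =
      t * algebraMap B L (algebraMap (MvPolynomial (Fin 2) k) B (X j))) (j : k) :
    γ (isotropicForm B j) = t * algebraMap B L (isotropicForm B j) := by
  rw [algHom_isotropicForm, hγ, hγ, isotropicForm, map_add, map_mul,
    ← IsScalarTower.algebraMap_apply k B L]
  ring

variable [Algebra (Polynomial B) L] [IsScalarTower B (Polynomial B) L]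
variable [IsLocalization.Away (Polynomial.X : Polynomial B) L]

lemma homogeneousPart_le_span {γ : B →ₐ[k] L} {t : Lˣ}
    (ht : (t : L) = algebraMap (Polynomial B) L Polynomial.X) {ι : Type*} {s : ι → B} {d : ι → ℤ}
    (hs : Submodule.span k (Set.range s) = ⊤) (hd : ∀ j, s j ∈ homogeneousPart γ t (d j)) (m : ℤ) :
    homogeneousPart γ t m ≤ Submodule.span k (s '' {j | d j = m}) := by
  let component : B →ₗ[k] B := (laurentCoeff m).restrictScalars k ∘ₗ γ.toLinearMap
  have component_apply {n : ℤ} {f : B} (hf : f ∈ homogeneousPart γ t n) :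
      component f = if n = m then f else 0 := by
    rw [← laurentCoeff_zpow_mul_algebraMap ht, ← mem_homogeneousPart.mp hf]
    rfl
  have component_mem (f : B) : component f ∈ Submodule.span k (s '' {j | d j = m}) := by
    have hf : f ∈ Submodule.span k (Set.range s) := hs ▸ Submodule.mem_top
    refine (Submodule.map_span_le component _ _).mpr ?_ (Submodule.mem_map_of_mem hf)
    rintro _ ⟨j, rfl⟩
    rw [component_apply (hd j)]
    split_ifs with hj
    · exact Submodule.subset_span ⟨j, hj, rfl⟩
    · exact Submodule.zero_mem _
  intro f hf
  simpa [component_apply hf] using component_mem f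

variable [Algebra (MvPolynomial (Fin 2) k) B]
variable [IsScalarTower k (MvPolynomial (Fin 2) k) B]
variable [IsLocalization.Away (X 0 ^ 2 + X 1 ^ 2 : MvPolynomial (Fin 2) k) B]

lemma homogeneousPart_eq_span_zpow_mul_zpow_sub [Invertible (2 : k)] {i : k} (hi : i ^ 2 = -1)
    {γ : B →ₐ[k] L} {t : Lˣ} (ht : (t : L) = algebraMap (Polynomial B) L Polynomial.X)
    (hγ : ∀ j, γ (algebraMap (MvPolynomial (Fin 2) k) B (X j)) =
      t * algebraMap B L (algebraMap (MvPolynomial (Fin 2) k) B (X j)))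
    {u v : Bˣ} (hu : (u : B) = isotropicForm B i) (hv : (v : B) = isotropicForm B (-i)) (m : ℤ) :
    homogeneousPart γ t m =
      Submodule.span k (Set.range fun p : ℤ ↦ ((u ^ p * v ^ (m - p) : Bˣ) : B)) := by
  have mem_part (p q : ℤ) : ((u ^ p * v ^ q : Bˣ) : B) ∈ homogeneousPart γ t (p + q) :=
    zpow_mul_zpow_mem_homogeneousPart (hu ▸ map_isotropicForm_of_map_X hγ i)
      (hv ▸ map_isotropicForm_of_map_X hγ (-i)) p q
  let b := isotropicBasis hi u v hu hv
  have b_apply (n : ℤ × ℤ) : b n = ((u ^ n.1 * v ^ n.2 : Bˣ) : B) :=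
    isotropicBasis_apply hi u v hu hv n
  apply le_antisymm
  · refine (homogeneousPart_le_span ht b.span_eq (d := fun n ↦ n.1 + n.2)
      (fun n ↦ b_apply n ▸ mem_part n.1 n.2) m).trans (Submodule.span_mono ?_)
    rintro _ ⟨⟨p, q⟩, rfl, rfl⟩
    exact ⟨p, by simp [b_apply]⟩
  · rw [Submodule.span_le]
    rintro _ ⟨p, rfl⟩
    simpa using mem_part p (m - p)

end Homogeneous

theorem stmt_13_general {k : Type*} [CommRing k] [Invertible (2 : k)] {i : k} (hi : i ^ 2 = -1)
    {B : Type*} [CommRing B] [Algebra (MvPolynomial (Fin 2) k) B] [Algebra k B]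
    [IsScalarTower k (MvPolynomial (Fin 2) k) B]
    [IsLocalization.Away (X 0 ^ 2 + X 1 ^ 2 : MvPolynomial (Fin 2) k) B]
    {L : Type*} [CommRing L] [Algebra (Polynomial B) L] [Algebra B L] [Algebra k L]
    [IsScalarTower B (Polynomial B) L] [IsScalarTower k B L]
    [IsLocalization.Away (Polynomial.X : Polynomial B) L] (γ : B →+* L)
    (hγ : ∀ a : MvPolynomial (Fin 2) k, γ (algebraMap _ B a) =
      aeval (fun j ↦ algebraMap (Polynomial B) L Polynomial.X *
        algebraMap B L (algebraMap (MvPolynomial (Fin 2) k) B (X j))) a)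
    (t : Lˣ) (ht : (t : L) = algebraMap (Polynomial B) L Polynomial.X)
    (u v : Bˣ) (hu : (u : B) = isotropicForm B i) (hv : (v : B) = isotropicForm B (-i)) (m : ℤ) :
    (∀ p : ℤ, γ ((u ^ p * v ^ (m - p) : Bˣ) : B) =
      ((t ^ m : Lˣ) : L) * algebraMap B L ((u ^ p * v ^ (m - p) : Bˣ) : B)) ∧
    LinearIndependent k (fun p : ℤ ↦ ((u ^ p * v ^ (m - p) : Bˣ) : B)) ∧
    (∀ f : B, γ f = ((t ^ m : Lˣ) : L) * algebraMap B L f →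
      f ∈ Submodule.span k (Set.range fun p : ℤ ↦ ((u ^ p * v ^ (m - p) : Bˣ) : B))) := by
  let γAlg : B →ₐ[k] L :=
    { γ with
      commutes' := fun c ↦ by
        simpa [IsScalarTower.algebraMap_apply k (MvPolynomial (Fin 2) k) B] using hγ (C c) }
  have γAlg_X (j : Fin 2) : γAlg (algebraMap (MvPolynomial (Fin 2) k) B (X j)) =
      t * algebraMap B L (algebraMap (MvPolynomial (Fin 2) k) B (X j)) := by
    rw [ht]
    exact (hγ (X j)).trans (aeval_X _ _)
  have h_span := homogeneousPart_eq_span_zpow_mul_zpow_sub hi ht γAlg_X hu hv m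
  exact ⟨fun p ↦ h_span.ge (Submodule.subset_span ⟨p, rfl⟩),
    linearIndependent_zpow_mul_zpow_sub hi u v hu hv m, fun f hf ↦ h_span.le hf⟩

instance invertibleTwoR0 : Invertible (2 : R0) :=
  IsUnit.invertible <| map_ofNat (algebraMap GaussianInt R0) 2 ▸
    IsLocalization.Away.algebraMap_isUnit (2 : GaussianInt)

instance isLocalizationAwayR : IsLocalization.Away (X 0 ^ 2 + X 1 ^ 2 : A0) R :=
  inferInstanceAs (IsLocalization.Away (aV ^ 2 + bV ^ 2) R)

lemma algebraMap_gaussianInt_i_sq : (algebraMap GaussianInt R0 ⟨0, 1⟩) ^ 2 = -1 := by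
  rw [← map_pow, ← map_one (algebraMap GaussianInt R0), ← map_neg]
  rfl

/-- For each `m ∈ ℤ`, the `R₀`-module of homogeneous elements of degree `m` in `R`
(those `f` with `γ(f) = t^m·f`, `γ` being induced by `a ↦ ta`, `b ↦ tb`) is free with
basis the family `(a+ib)^p·(a-ib)^q`, `p + q = m` (indexed by `p ∈ ℤ`, `q = m - p`):
each basis vector is homogeneous of degree `m`, the family is linearly independent
over `R₀`, and it spans all homogeneous elements of degree `m`. -/
theorem stmt_13 (γ : R →+* S)
    (hγ : ∀ a : A0, γ (algebraMap A0 R a) = aeval substVal a)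
    (uT : Sˣ) (huT : (uT : S) = tS)
    (ua ub : Rˣ) (hua : (ua : R) = aR + iR * bR) (hub : (ub : R) = aR - iR * bR)
    (m : ℤ) (e : ℤ → R) (he : ∀ p : ℤ, e p = ((ua ^ p * ub ^ (m - p) : Rˣ) : R)) :
    (∀ p : ℤ, γ (e p) = ((uT ^ m : Sˣ) : S) * algebraMap R S (e p)) ∧
    LinearIndependent R0 e ∧
    (∀ f : R, γ f = ((uT ^ m : Sˣ) : S) * algebraMap R S f →
      f ∈ Submodule.span R0 (Set.range e)) := by
  obtain rfl : e = fun p ↦ ((ua ^ p * ub ^ (m - p) : Rˣ) : R) := funext he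
  exact stmt_13_general algebraMap_gaussianInt_i_sq γ hγ uT huT ua ub hua
    (hub.trans (isotropicForm_neg R _).symm) m
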